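/- The infinite series identity 15√2/4 = Σ_{k=0}^{∞} (-1/27)^k · [(-1/4)_k (5/4)_k (5/4)_k] / [(1)_k (13/12)_k (17/12)_k] · (28k + 5) holds, where the sum is over natural numbers k and all quantities are real numbers. -/

import Mathlib

noncomputable def risingFactorial (a : ℝ) (k : ℕ) : ℝ := ∏ i ∈ Finset.range k, (a + i)

/-!
Let `F n k = (α - n)_k (β)_k / ((γ + n)_k k!)`, divided by its sum over `k` as given by Gauss's
theorem for `₂F₁(α - n, β; γ + n; 1)`. Then `F (n + 1) k - F n k = R n (k + 1) - R n k` for a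
rational multiple `R` of `F`, an identity that survives a shift of `k` by a real number. Take
`(α, β, γ) = (-1/4, 3/4, 1/2)` and evaluate along `k = m + 2 * n + 3/4`. With `H n m = F n k`
and `G n m = F n k + F n (k + 1) + R n (k + 2)`, telescoping yields
`G n (m + 1) - G n m = H (n + 1) m - H n m`. Here `H 0 m = 0`, because Gauss's series diverges
for `n = 0`, and `H n m → 0` as `n → ∞`, so that `∑ n, G n m` is independent of `m`. At `m = 0`
it is, suitably normalized, a tenth of the series in question, while for `m → ∞` only `G 0 m`
survives, whose limit is a quotient of Gamma values.
-/

open Filter Topology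

section WilfZeilberger

lemma tsum_eq_tsum_of_sub_eq_telescope {E : Type*} [AddCommGroup E] [TopologicalSpace E]
    [IsTopologicalAddGroup E] [T2Space E] {a b c : ℕ → E} (ha : Summable a) (hb : Summable b)
    (hsub : ∀ n, a n - b n = c (n + 1) - c n) (hc₀ : c 0 = 0) (hc : Tendsto c atTop (𝓝 0)) :
    ∑' n, a n = ∑' n, b n := by
  have hpartial : Tendsto (fun N ↦ ∑ n ∈ Finset.range N, (a n - b n)) atTop (𝓝 0) := by
    simpa only [hsub, Finset.sum_range_sub, hc₀, sub_zero] using hc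
  have hdiff : ∑' n, (a n - b n) = 0 :=
    tendsto_nhds_unique (ha.sub hb).hasSum.tendsto_sum_nat hpartial
  rwa [ha.tsum_sub hb, sub_eq_zero] at hdiff

theorem tsum_eq_tsum_of_wz_pair {E : Type*} [NormedAddCommGroup E] [CompleteSpace E]
    {G H : ℕ → ℕ → E} {g : ℕ → E} {bound : ℕ → ℝ}
    (hwz : ∀ n m, G n (m + 1) - G n m = H (n + 1) m - H n m) (hH₀ : ∀ m, H 0 m = 0)
    (hH : ∀ m, Tendsto (fun n ↦ H n m) atTop (𝓝 0)) (hbound : Summable bound)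
    (hG : ∀ n m, ‖G n m‖ ≤ bound n) (hlim : ∀ n, Tendsto (G n) atTop (𝓝 (g n))) :
    ∑' n, G n 0 = ∑' n, g n := by
  have hsummable (m : ℕ) : Summable (fun n ↦ G n m) := hbound.of_norm_bounded (hG · m)
  have hconst (m : ℕ) : ∑' n, G n m = ∑' n, G n 0 := by
    induction m with
    | zero => rfl
    | succ m ih =>
      rw [← ih]
      exact tsum_eq_tsum_of_sub_eq_telescope (hsummable _) (hsummable _) (hwz · m) (hH₀ m) (hH m)
  have htannery : Tendsto (fun m ↦ ∑' n, G n m) atTop (𝓝 (∑' n, g n)) :=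
    tendsto_tsum_of_dominated_convergence hbound hlim (Eventually.of_forall fun m n ↦ hG n m)
  simp only [hconst] at htannery
  exact tendsto_nhds_unique tendsto_const_nhds htannery

end WilfZeilberger

section RisingFactorial

lemma risingFactorial_zero (a : ℝ) : risingFactorial a 0 = 1 :=
  Finset.prod_range_zero _

lemma risingFactorial_succ (a : ℝ) (k : ℕ) :
    risingFactorial a (k + 1) = risingFactorial a k * (a + k) :=
  Finset.prod_range_succ _ k

lemma tendsto_risingFactorial_div_mul_rpow {a : ℝ} (ha : ∀ m : ℕ, a ≠ -m) (b : ℝ) :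
    Tendsto (fun m : ℕ ↦
      risingFactorial a (m + 1) / risingFactorial b (m + 1) * (m : ℝ) ^ (b - a)) atTop
      (𝓝 (Real.Gamma b / Real.Gamma a)) := by
  have hquot := (Real.GammaSeq_tendsto_Gamma b).div (Real.GammaSeq_tendsto_Gamma a)
    (Real.Gamma_ne_zero ha)
  refine hquot.congr' ?_
  filter_upwards [eventually_gt_atTop 0] with m hm
  have hm' : (0 : ℝ) < m := by exact_mod_cast hm
  simp only [Pi.div_apply, Real.GammaSeq, Real.rpow_sub hm', risingFactorial]
  field_simp

end RisingFactorial

section GaussPair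

/-- The hypergeometric weight common to `gaussTerm` and `gaussMate`; the remaining factors of both
are the polynomials `gaussTermPoly` and `gaussMatePoly`. -/
noncomputable def gaussWeight (n m : ℕ) : ℝ :=
  (-1) ^ n * risingFactorial (1 / 2) (m + n) * risingFactorial (3 / 2) (m + 2 * n) *
      risingFactorial (-1 / 4) n * risingFactorial (5 / 4) n * risingFactorial (3 / 4) (2 * n) /
    (risingFactorial (5 / 4) (m + 3 * n + 2) * risingFactorial (7 / 4) (m + 2 * n + 1) *
      (2 * n + 1).factorial)

/-- The polynomial factor of `gaussTerm`, which cancels the last factors of the denominator of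
`gaussWeight`. -/
noncomputable def gaussTermPoly (n m : ℝ) : ℝ :=
  2 * n * (2 * n + 1) * (m + 3 * n + 5 / 4) * (m + 3 * n + 9 / 4) * (m + 2 * n + 7 / 4)

/-- The polynomial factor of `gaussMate`. Its three summands come from `F n k`, `F n (k + 1)` and
`R n (k + 2)`, where `k = m + 2 * n + 3/4`. -/
noncomputable def gaussMatePoly (n m : ℝ) : ℝ :=
  gaussTermPoly n m +
    2 * n * (2 * n + 1) * (m + n + 1 / 2) * (m + 2 * n + 3 / 2) * (m + 3 * n + 9 / 4) +
    (m + n + 1 / 2) * (m + 2 * n + 3 / 2) * (m + 2 * n + 5 / 2) *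
      ((2 * n + 1) * m + (4 * n ^ 2 + 17 / 4 * n + 21 / 16))

/-- The normalized summand `F n k` of Gauss's series at `k = m + 2 * n + 3/4`, up to a constant
factor. -/
noncomputable def gaussTerm (n m : ℕ) : ℝ := gaussWeight n m * gaussTermPoly n m

/-- The Wilf–Zeilberger mate of `gaussTerm`. -/
noncomputable def gaussMate (n m : ℕ) : ℝ := gaussWeight n m * gaussMatePoly n m

/-- The quotient of `gaussWeight (n + 1) m` by `gaussWeight n m`. -/
noncomputable def gaussWeightRatio (n m : ℝ) : ℝ :=
  -((m + n + 1 / 2) * (n - 1 / 4) * (n + 5 / 4) * (2 * n + 3 / 4) /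
      ((m + 3 * n + 13 / 4) * ((m + 3 * n + 17 / 4) * (m + 3 * n + 21 / 4) * (2 * n + 2)))) *
    ((2 * n + 7 / 4) / (2 * n + 3)) * ((m + 2 * n + 3 / 2) / (m + 2 * n + 11 / 4)) *
    ((m + 2 * n + 5 / 2) / (m + 2 * n + 15 / 4))

lemma gaussWeight_succ_left (n m : ℕ) :
    gaussWeight (n + 1) m = gaussWeight n m * gaussWeightRatio n m := by
  simp only [gaussWeight, gaussWeightRatio, mul_add_one, ← add_assoc, risingFactorial_succ,
    Nat.factorial_succ, pow_succ]
  push_cast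
  field_simp
  ring

lemma gaussWeight_succ_right (n m : ℕ) :
    gaussWeight n (m + 1) = gaussWeight n m *
      ((m + n + 1 / 2) * (m + 2 * n + 3 / 2) / ((m + 3 * n + 13 / 4) * (m + 2 * n + 11 / 4))) := by
  simp only [gaussWeight, add_right_comm m 1, risingFactorial_succ]
  push_cast
  field_simp
  ring

theorem gaussMate_succ_sub (n m : ℕ) :
    gaussMate n (m + 1) - gaussMate n m = gaussTerm (n + 1) m - gaussTerm n m := by
  simp only [gaussMate, gaussTerm, gaussWeight_succ_left, gaussWeight_succ_right, mul_assoc,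
    ← mul_sub]
  congr 1
  simp only [gaussWeightRatio, gaussMatePoly, gaussTermPoly]
  push_cast
  field_simp
  ring

lemma gaussTerm_zero_left (m : ℕ) : gaussTerm 0 m = 0 := by
  simp [gaussTerm, gaussTermPoly]

end GaussPair

section Bounds

variable {n m : ℝ}

lemma gaussTermPoly_nonneg (hn : 0 ≤ n) (hm : 0 ≤ m) : 0 ≤ gaussTermPoly n m := by
  unfold gaussTermPoly; positivity

lemma gaussTermPoly_le_gaussMatePoly (hn : 0 ≤ n) (hm : 0 ≤ m) :
    gaussTermPoly n m ≤ gaussMatePoly n m := by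
  rw [gaussMatePoly, add_assoc]
  exact le_add_of_nonneg_right (by positivity)

lemma gaussMatePoly_nonneg (hn : 0 ≤ n) (hm : 0 ≤ m) : 0 ≤ gaussMatePoly n m :=
  (gaussTermPoly_nonneg hn hm).trans (gaussTermPoly_le_gaussMatePoly hn hm)

lemma gaussMatePoly_succ_mul_le (hn : 0 ≤ n) (hm : 0 ≤ m) :
    (m + n + 1 / 2) * (n + 1 / 4) * (n + 5 / 4) * (2 * n + 3 / 4) * gaussMatePoly (n + 1) m ≤
      (n + 1) * (m + 3 * n + 17 / 4) * (m + 3 * n + 21 / 4) * (2 * n + 2) * gaussMatePoly n m := by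
  rw [← sub_nonneg]
  unfold gaussMatePoly gaussTermPoly
  ring_nf
  positivity

lemma abs_gaussWeightRatio_le (hn : 0 ≤ n) (hm : 0 ≤ m) :
    |gaussWeightRatio n m| ≤ (m + n + 1 / 2) * (n + 1 / 4) * (n + 5 / 4) * (2 * n + 3 / 4) /
      ((m + 3 * n + 13 / 4) * ((m + 3 * n + 17 / 4) * (m + 3 * n + 21 / 4) * (2 * n + 2))) := by
  have hdiv {x y : ℝ} (hx : 0 ≤ x) (hxy : x ≤ y) : |x / y| ≤ 1 := by
    rw [abs_of_nonneg (div_nonneg hx (hx.trans hxy))]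
    exact div_le_one_of_le₀ hxy (hx.trans hxy)
  have habs : |n - 1 / 4| ≤ n + 1 / 4 := abs_le.2 ⟨by linarith, by linarith⟩
  rw [gaussWeightRatio, abs_mul, abs_mul, abs_mul, abs_neg, abs_div,
    abs_of_pos (a := _ * (_ * (2 * n + 2))) (by positivity), abs_mul, abs_mul, abs_mul,
    abs_of_nonneg (a := m + n + 1 / 2) (by positivity),
    abs_of_nonneg (a := n + 5 / 4) (by positivity),
    abs_of_nonneg (a := 2 * n + 3 / 4) (by positivity)]
  refine (mul_le_of_le_one_right (by positivity) (hdiv (by positivity) (by linarith))).trans <|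
    (mul_le_of_le_one_right (by positivity) (hdiv (by positivity) (by linarith))).trans <|
    (mul_le_of_le_one_right (by positivity) (hdiv (by positivity) (by linarith))).trans ?_
  gcongr

lemma abs_gaussWeightRatio_mul_gaussMatePoly_le (hn : 0 ≤ n) (hm : 0 ≤ m) :
    |gaussWeightRatio n m| * gaussMatePoly (n + 1) m ≤
      (n + 1) / (m + 3 * n + 13 / 4) * gaussMatePoly n m := by
  have hpoly : 0 ≤ gaussMatePoly (n + 1) m := gaussMatePoly_nonneg (by positivity) hm
  refine (mul_le_mul_of_nonneg_right (abs_gaussWeightRatio_le hn hm) hpoly).trans ?_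
  rw [div_mul_eq_mul_div, div_mul_eq_mul_div, div_le_div_iff₀ (by positivity) (by positivity)]
  have hle := mul_le_mul_of_nonneg_right (gaussMatePoly_succ_mul_le hn hm)
    (show 0 ≤ m + 3 * n + 13 / 4 by positivity)
  linarith

lemma abs_gaussMate_succ_le (n m : ℕ) :
    |gaussMate (n + 1) m| ≤ (n + 1) / (m + 3 * n + 13 / 4) * |gaussMate n m| := by
  have hn : (0 : ℝ) ≤ n := n.cast_nonneg
  have hm : (0 : ℝ) ≤ m := m.cast_nonneg
  have hle := abs_gaussWeightRatio_mul_gaussMatePoly_le hn hm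
  rw [gaussMate, gaussMate, gaussWeight_succ_left, abs_mul, abs_mul, abs_mul, Nat.cast_succ,
    abs_of_nonneg (gaussMatePoly_nonneg hn hm),
    abs_of_nonneg (gaussMatePoly_nonneg (by positivity) hm), mul_assoc, mul_left_comm (_ / _)]
  exact mul_le_mul_of_nonneg_left hle (abs_nonneg _)

lemma abs_gaussMate_le_geometric (n m : ℕ) :
    |gaussMate n m| ≤ (1 / 3) ^ n * |gaussMate 0 m| := by
  induction n with
  | zero => simp
  | succ n ih =>
    have hratio : ((n : ℝ) + 1) / (m + 3 * n + 13 / 4) ≤ 1 / 3 := by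
      rw [div_le_div_iff₀ (by positivity) (by positivity)]
      linarith [(m.cast_nonneg : (0 : ℝ) ≤ m)]
    calc |gaussMate (n + 1) m|
        ≤ (n + 1) / (m + 3 * n + 13 / 4) * |gaussMate n m| := abs_gaussMate_succ_le n m
      _ ≤ 1 / 3 * ((1 / 3) ^ n * |gaussMate 0 m|) := by gcongr
      _ = (1 / 3) ^ (n + 1) * |gaussMate 0 m| := by ring

lemma abs_gaussTerm_le_abs_gaussMate (n m : ℕ) : |gaussTerm n m| ≤ |gaussMate n m| := by
  have hn : (0 : ℝ) ≤ n := n.cast_nonneg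
  have hm : (0 : ℝ) ≤ m := m.cast_nonneg
  rw [gaussTerm, gaussMate, abs_mul, abs_mul]
  gcongr
  exacts [gaussTermPoly_nonneg hn hm, gaussTermPoly_le_gaussMatePoly hn hm]

lemma tendsto_gaussTerm (m : ℕ) : Tendsto (fun n ↦ gaussTerm n m) atTop (𝓝 0) := by
  have hgeom : Tendsto (fun n : ℕ ↦ (1 / 3 : ℝ) ^ n * |gaussMate 0 m|) atTop (𝓝 0) := by
    simpa using (tendsto_pow_atTop_nhds_zero_of_lt_one (r := (1 / 3 : ℝ)) (by norm_num)
      (by norm_num)).mul_const |gaussMate 0 m|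
  exact squeeze_zero_norm
    (fun n ↦ (abs_gaussTerm_le_abs_gaussMate n m).trans (abs_gaussMate_le_geometric n m)) hgeom

end Bounds

section Limits

lemma Gamma_five_fourths_mul_Gamma_seven_fourths :
    Real.Gamma (5 / 4) * Real.Gamma (7 / 4) = 3 / 16 * (Real.pi * √2) := by
  have hreflection : Real.Gamma (1 / 4) * Real.Gamma (3 / 4) = Real.pi * √2 := by
    have h := Real.Gamma_mul_Gamma_one_sub (1 / 4)
    rw [show (1 : ℝ) - 1 / 4 = 3 / 4 by norm_num, mul_one_div, Real.sin_pi_div_four] at h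
    rw [h]
    field_simp
    rw [Real.sq_sqrt zero_le_two]
  rw [show (5 / 4 : ℝ) = 1 / 4 + 1 by norm_num, show (7 / 4 : ℝ) = 3 / 4 + 1 by norm_num,
    Real.Gamma_add_one (by norm_num), Real.Gamma_add_one (by norm_num)]
  linear_combination 3 / 16 * hreflection

lemma Gamma_one_half_mul_Gamma_three_halves :
    Real.Gamma (1 / 2) * Real.Gamma (3 / 2) = Real.pi / 2 := by
  rw [show (3 / 2 : ℝ) = 1 / 2 + 1 by norm_num, Real.Gamma_add_one (by norm_num),
    Real.Gamma_one_half_eq]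
  linear_combination 1 / 2 * Real.mul_self_sqrt Real.pi_pos.le

lemma gaussMate_zero_left (m : ℕ) :
    gaussMate 0 m = risingFactorial (1 / 2) (m + 1) / risingFactorial (5 / 4) (m + 1) *
      (risingFactorial (3 / 2) (m + 1) / risingFactorial (7 / 4) (m + 1)) *
      ((m + 5 / 2) * (m + 21 / 16) / (m + 9 / 4)) := by
  simp only [gaussMate, gaussWeight, gaussMatePoly, gaussTermPoly, risingFactorial_succ,
    risingFactorial_zero, mul_zero, add_zero, zero_add, Nat.factorial_one, pow_zero]
  push_cast
  field_simp
  ring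

lemma tendsto_gaussMate_zero_left : Tendsto (gaussMate 0) atTop (𝓝 (3 * √2 / 8)) := by
  have hne {a : ℝ} (ha : 0 < a) (m : ℕ) : a ≠ -m := by
    have : (0 : ℝ) ≤ m := m.cast_nonneg
    linarith
  have hgamma := (tendsto_risingFactorial_div_mul_rpow (hne one_half_pos) (5 / 4)).mul
    (tendsto_risingFactorial_div_mul_rpow (hne (a := 3 / 2) (by norm_num)) (7 / 4))
  have hrational := (((tendsto_natCast_div_add_atTop (5 / 2 : ℝ)).inv₀ one_ne_zero).mul
    ((tendsto_natCast_div_add_atTop (21 / 16 : ℝ)).inv₀ one_ne_zero)).mul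
    (tendsto_natCast_div_add_atTop (9 / 4 : ℝ))
  have hlimit : Real.Gamma (5 / 4) / Real.Gamma (1 / 2) *
      (Real.Gamma (7 / 4) / Real.Gamma (3 / 2)) * (1⁻¹ * 1⁻¹ * 1) = 3 * √2 / 8 := by
    rw [div_mul_div_comm, Gamma_five_fourths_mul_Gamma_seven_fourths,
      Gamma_one_half_mul_Gamma_three_halves]
    field_simp
    norm_num
  rw [← hlimit]
  refine (hgamma.mul hrational).congr' ?_
  filter_upwards [eventually_gt_atTop 0] with m hm
  have hm' : (0 : ℝ) < m := by exact_mod_cast hm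
  have hpow : (m : ℝ) ^ (5 / 4 - 1 / 2 : ℝ) * (m : ℝ) ^ (7 / 4 - 3 / 2 : ℝ) = m := by
    rw [← Real.rpow_add hm']; norm_num
  rw [gaussMate_zero_left, mul_mul_mul_comm (_ / _) (_ ^ _), hpow]
  field_simp

lemma exists_abs_gaussMate_le : ∃ K, ∀ n m, |gaussMate n m| ≤ (1 / 3) ^ n * K := by
  obtain ⟨K, hK⟩ := tendsto_gaussMate_zero_left.abs.bddAbove_range
  refine ⟨K, fun n m ↦ (abs_gaussMate_le_geometric n m).trans ?_⟩
  gcongr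
  exact hK ⟨m, rfl⟩

lemma tendsto_gaussMate_succ_left (n : ℕ) : Tendsto (gaussMate (n + 1)) atTop (𝓝 0) := by
  obtain ⟨K, hK⟩ := exists_abs_gaussMate_le
  have hbound : Tendsto (fun m : ℕ ↦ ((n : ℝ) + 1) / (m + 3 * n + 13 / 4) * ((1 / 3) ^ n * K))
      atTop (𝓝 0) := by
    have hdenom : Tendsto (fun m : ℕ ↦ (m : ℝ) + 3 * n + 13 / 4) atTop atTop :=
      tendsto_atTop_add_const_right _ _
        (tendsto_atTop_add_const_right _ _ tendsto_natCast_atTop_atTop)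
    simpa using (hdenom.const_div_atTop ((n : ℝ) + 1)).mul_const ((1 / 3) ^ n * K)
  refine squeeze_zero_norm (fun m ↦ (abs_gaussMate_succ_le n m).trans ?_) hbound
  gcongr
  exact hK n m

theorem tsum_gaussMate_zero_right : ∑' n, gaussMate n 0 = 3 * √2 / 8 := by
  obtain ⟨K, hK⟩ := exists_abs_gaussMate_le
  have hgeom : Summable fun n : ℕ ↦ (1 / 3 : ℝ) ^ n * K :=
    (summable_geometric_of_lt_one (by norm_num) (by norm_num)).mul_right K
  have hlim (n : ℕ) : Tendsto (gaussMate n) atTop (𝓝 (if n = 0 then 3 * √2 / 8 else 0)) := by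
    cases n with
    | zero => exact tendsto_gaussMate_zero_left
    | succ n => exact tendsto_gaussMate_succ_left n
  rw [tsum_eq_tsum_of_wz_pair gaussMate_succ_sub gaussTerm_zero_left tendsto_gaussTerm hgeom hK
    hlim, tsum_ite_eq]

end Limits

lemma gaussWeight_zero_right_mul (k : ℕ) :
    gaussWeight k 0 * (((k : ℝ) + 1 / 2) * (k + 3 / 4) * (2 * k + 3 / 4) * (2 * k + 7 / 4)) =
      (-1 / 27) ^ k *
        (risingFactorial (-1 / 4) k * risingFactorial (5 / 4) k * risingFactorial (5 / 4) k) /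
        (risingFactorial 1 k * risingFactorial (13 / 12) k * risingFactorial (17 / 12) k) / 10 := by
  induction k with
  | zero => norm_num [gaussWeight, risingFactorial_zero, risingFactorial_succ]
  | succ k ih =>
    have hratio : gaussWeightRatio k (0 : ℕ) *
        (((k + 1 : ℕ) + 1 / 2) * ((k + 1 : ℕ) + 3 / 4) * (2 * (k + 1 : ℕ) + 3 / 4) *
          (2 * (k + 1 : ℕ) + 7 / 4)) =
        (k + 1 / 2) * (k + 3 / 4) * (2 * k + 3 / 4) * (2 * k + 7 / 4) *
          (-1 / 27 * ((-1 / 4 + k) * (5 / 4 + k) * (5 / 4 + k)) /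
            ((1 + k) * (13 / 12 + k) * (17 / 12 + k))) := by
      rw [gaussWeightRatio]
      push_cast
      field_simp
      ring
    rw [gaussWeight_succ_left, mul_assoc, hratio, ← mul_assoc, ih]
    simp only [risingFactorial_succ, pow_succ]
    field_simp

theorem gaussMate_zero_right (k : ℕ) :
    10 * gaussMate k 0 = (-1 / 27) ^ k *
        (risingFactorial (-1 / 4) k * risingFactorial (5 / 4) k * risingFactorial (5 / 4) k) /
        (risingFactorial 1 k * risingFactorial (13 / 12) k * risingFactorial (17 / 12) k) *
      (28 * k + 5) := by
  have hpoly : gaussMatePoly k (0 : ℕ) =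
      ((k : ℝ) + 1 / 2) * (k + 3 / 4) * (2 * k + 3 / 4) * (2 * k + 7 / 4) * (28 * k + 5) := by
    simp only [gaussMatePoly, gaussTermPoly]
    push_cast
    ring
  rw [gaussMate, hpoly]
  linear_combination 10 * (28 * (k : ℝ) + 5) * gaussWeight_zero_right_mul k

theorem stmt_17 :
    15 * Real.sqrt 2 / 4 =
      ∑' k : ℕ, (-1/27 : ℝ) ^ k * (risingFactorial (-1/4) k * risingFactorial (5/4) k * risingFactorial (5/4) k) /
        (risingFactorial (1) k * risingFactorial (13/12) k * risingFactorial (17/12) k) * (28 * (k:ℝ) + 5) := by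
  simp only [← gaussMate_zero_right]
  rw [tsum_mul_left, tsum_gaussMate_zero_right]
  ring
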